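/- If R, regarded as a module over itself, is mono-coretractable, then R has no proper dense ideals: every ideal I of R that is dense in R (as a submodule of the R-module R) equals R. -/

import Mathlib

/-- An `R`-module `M` is mono-coretractable if for every submodule `N` of `M`
there exists an injective `R`-linear map from `M ⧸ N` to `M`. -/
def MonoCoretractable (R : Type*) (M : Type*) [Ring R] [AddCommGroup M] [Module R M] : Prop :=
  ∀ N : Submodule R M, ∃ f : (M ⧸ N) →ₗ[R] M, Function.Injective f

/-- A submodule `N` of an `R`-module `M` is dense in `M` if for every `y ∈ M` and every
nonzero `x ∈ M` there exists `r ∈ R` such that `r • x ≠ 0` and `r • y ∈ N`. -/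
def IsDenseSubmodule {R : Type*} {M : Type*} [Ring R] [AddCommGroup M] [Module R M]
    (N : Submodule R M) : Prop :=
  ∀ y x : M, x ≠ 0 → ∃ r : R, r • x ≠ 0 ∧ r • y ∈ N

theorem IsDenseSubmodule.linearMap_quotient_eq_zero {R M : Type*} [Ring R] [AddCommGroup M]
    [Module R M] {N : Submodule R M} (hN : IsDenseSubmodule N) (f : (M ⧸ N) →ₗ[R] M) :
    f = 0 := by
  ext y
  by_contra hfy
  obtain ⟨r, hr, hry⟩ := hN y (f (N.mkQ y)) hfy
  apply hr
  calc r • f (N.mkQ y) = f (N.mkQ (r • y)) := by rw [map_smul, map_smul]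
    _ = f 0 := by rw [N.mkQ_apply, (Submodule.Quotient.mk_eq_zero N).2 hry]
    _ = 0 := map_zero f

theorem monoCoretractable_no_proper_dense_ideal_general {R M : Type*} [Ring R]
    [AddCommGroup M] [Module R M] (h : MonoCoretractable R M) {N : Submodule R M}
    (hN : IsDenseSubmodule N) : N = ⊤ := by
  obtain ⟨f, hf⟩ := h N
  have hf_zero : f = 0 := hN.linearMap_quotient_eq_zero f
  calc N = LinearMap.ker (f ∘ₗ N.mkQ) := by
        rw [LinearMap.ker_comp_of_ker_eq_bot _ (LinearMap.ker_eq_bot.2 hf), N.ker_mkQ]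
    _ = ⊤ := by rw [hf_zero, LinearMap.zero_comp, LinearMap.ker_zero]

theorem monoCoretractable_no_proper_dense_ideal {R : Type*} [Ring R]
    (h : MonoCoretractable R R) :
    ∀ I : Ideal R, IsDenseSubmodule I → I = ⊤ :=
  fun _ hI ↦ monoCoretractable_no_proper_dense_ideal_general h hI
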